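/- arXiv:2509.25582 — 3 statements merged into one kernel-verified Lean document; each statement's English description precedes it below -/
import Mathlib

section
/- Let Π be a nonempty set, K ≥ 1 an integer, J : Π → ℝ, and g_k : Π → ℝ for k = 1,…,K. Suppose there exists a primal-optimal policy π* (i.e., π* is feasible and J(π) ≤ J(π*) for every feasible π). If (π̄, λ̄) is a fixed point of the iterative scheme, then π̄ is feasible (g_k(π̄) ≤ 0 for all k) and J(π̄) = J(π*); in particular π̄ is primal-optimal. -/
/-- Theorem 1 (forward direction): every fixed point `(π̄, λ̄)` of the iterative
scheme is feasible and primal-optimal.  Here `L_Σ(π, λ) = J π - λ ∑ₖ [gₖ π]₊`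
and `s(π) = maxₖ gₖ π = ⨆ k, g k π`. -/
theorem fixed_point_is_primal_optimal {P : Type*} [Nonempty P] (K : ℕ) (hK : 1 ≤ K)
    (J : P → ℝ) (g : Fin K → P → ℝ)
    (πstar : P) (hfeas : ∀ k, g k πstar ≤ 0)
    (hopt : ∀ π : P, (∀ k, g k π ≤ 0) → J π ≤ J πstar)
    (πbar : P) (lambar : ℝ)
    (hmax : ∀ π : P,
      J π - lambar * ∑ k, max (g k π) 0 ≤ J πbar - lambar * ∑ k, max (g k πbar) 0)
    (hfix : ∃ η₀ > (0 : ℝ), ∀ η : ℝ, 0 < η → η ≤ η₀ →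
      lambar = max (lambar + η * ⨆ k, g k πbar) 0) :
    (∀ k, g k πbar ≤ 0) ∧ J πbar = J πstar := by
  obtain ⟨η₀, hη₀, hfix⟩ := hfix
  have h := hfix η₀ hη₀ le_rfl
  -- A positive `s(π̄)` would make the multiplier update strictly increase `λ̄`.
  have hs : ⨆ k, g k πbar ≤ 0 := by
    have h1 : lambar + η₀ * (⨆ k, g k πbar) ≤ lambar :=
      (le_max_left _ _).trans h.ge
    by_contra! hpos
    linarith [mul_pos hη₀ hpos]
  have hbar : ∀ k, g k πbar ≤ 0 := fun k =>
    (le_ciSup (f := fun k => g k πbar) (Set.finite_range _).bddAbove k).trans hs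
  refine ⟨hbar, le_antisymm (hopt πbar hbar) ?_⟩
  -- Both policies are feasible, so the penalty terms vanish in the maximality of `π̄`.
  have hm := hmax πstar
  simpa [max_eq_right (hfeas _), max_eq_right (hbar _)] using hm
end

section
/- Let Π be a nonempty set, K ≥ 1 an integer, J : Π → ℝ, g_k : Π → ℝ for k = 1,…,K, and let π* be a feasible policy with J(π) ≤ J(π*) for every feasible π. Suppose λ* ∈ ℝ^K satisfies λ*_k ≥ 0 for all k and the Lagrangian bound J(π) − ∑_{k=1}^K λ*_k g_k(π) ≤ J(π*) for every π ∈ Π. Then for every λ̄ ≥ max_k λ*_k (the sup-norm of λ*) and every π ∈ Π, the exact penalty bound L_Σ(π, λ̄) = J(π) − λ̄ ∑_{k=1}^K [g_k(π)]_+ ≤ J(π*) holds. -/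
/-- Exact penalty bound: if `λ*` is an optimal dual multiplier
(`J π - ∑ₖ λ*ₖ gₖ π ≤ J π*` for all `π`), then for every `λ̄ ≥ maxₖ λ*ₖ` and
every `π`, `L_Σ(π, λ̄) = J π - λ̄ ∑ₖ [gₖ π]₊ ≤ J π*`. -/
theorem exact_penalty_bound {P : Type*} [Nonempty P] (K : ℕ) (hK : 1 ≤ K)
    (J : P → ℝ) (g : Fin K → P → ℝ)
    (πstar : P) (hfeas : ∀ k, g k πstar ≤ 0)
    (hopt : ∀ π : P, (∀ k, g k π ≤ 0) → J π ≤ J πstar)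
    (lamstar : Fin K → ℝ) (hnn : ∀ k, 0 ≤ lamstar k)
    (hlag : ∀ π : P, J π - ∑ k, lamstar k * g k π ≤ J πstar)
    (lambar : ℝ) (hbar : (⨆ k, lamstar k) ≤ lambar) :
    ∀ π : P, J π - lambar * ∑ k, max (g k π) 0 ≤ J πstar := by
  intro π
  -- The supremum is over a finite family, hence bounded above, so it dominates each multiplier.
  have hle : ∀ k, lamstar k ≤ lambar := fun k =>
    (le_ciSup (Set.finite_range lamstar).bddAbove k).trans hbar
  -- Termwise, `λ*ₖ gₖ ≤ λ*ₖ [gₖ]₊ ≤ λ̄ [gₖ]₊`.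
  have hsum : ∑ k, lamstar k * g k π ≤ lambar * ∑ k, max (g k π) 0 := by
    rw [Finset.mul_sum]
    refine Finset.sum_le_sum fun k _ => ?_
    exact (mul_le_mul_of_nonneg_left (le_max_left _ _) (hnn k)).trans
      (mul_le_mul_of_nonneg_right (hle k) (le_max_right _ _))
  linarith [hlag π]
end

section
/- Let Π be a nonempty set, K ≥ 1 an integer, J : Π → ℝ, g_k : Π → ℝ for k = 1,…,K, and let π* be a feasible policy with J(π) ≤ J(π*) for every feasible π. Suppose λ* ∈ ℝ^K satisfies λ*_k ≥ 0 for all k and J(π) − ∑_{k=1}^K λ*_k g_k(π) ≤ J(π*) for every π ∈ Π. Then for every λ̄ ≥ max_k λ*_k, the policy π* maximizes L_Σ(·, λ̄) over Π, i.e., L_Σ(π, λ̄) ≤ L_Σ(π*, λ̄) = J(π*) for all π ∈ Π. -/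
/-- Converse direction of Theorem 1 (maximizer half): a primal-optimal `π*`
maximizes the penalized Lagrangian `L_Σ(·, λ̄)` for any `λ̄ ≥ maxₖ λ*ₖ`, with
`L_Σ(π*, λ̄) = J π*`. -/
theorem primal_optimal_maximizes_penalized_lagrangian {P : Type*} [Nonempty P]
    (K : ℕ) (hK : 1 ≤ K)
    (J : P → ℝ) (g : Fin K → P → ℝ)
    (πstar : P) (hfeas : ∀ k, g k πstar ≤ 0)
    (hopt : ∀ π : P, (∀ k, g k π ≤ 0) → J π ≤ J πstar)
    (lamstar : Fin K → ℝ) (hnn : ∀ k, 0 ≤ lamstar k)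
    (hlag : ∀ π : P, J π - ∑ k, lamstar k * g k π ≤ J πstar)
    (lambar : ℝ) (hbar : (⨆ k, lamstar k) ≤ lambar) :
    (∀ π : P, J π - lambar * ∑ k, max (g k π) 0
        ≤ J πstar - lambar * ∑ k, max (g k πstar) 0) ∧
    J πstar - lambar * ∑ k, max (g k πstar) 0 = J πstar := by
  have hle : ∀ k, lamstar k ≤ lambar := fun k =>
    (le_ciSup (Set.finite_range lamstar).bddAbove k).trans hbar
  have hzero : J πstar - lambar * ∑ k, max (g k πstar) 0 = J πstar := by
    simp [max_eq_right (hfeas _)]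
  refine ⟨fun π => ?_, hzero⟩
  rw [hzero]
  -- Termwise `λ*ₖ gₖ ≤ λ*ₖ [gₖ]₊ ≤ λ̄ [gₖ]₊`, so the penalty dominates the Lagrangian term.
  have hsum : ∑ k, lamstar k * g k π ≤ lambar * ∑ k, max (g k π) 0 := by
    rw [Finset.mul_sum]
    refine Finset.sum_le_sum fun k _ => ?_
    exact (mul_le_mul_of_nonneg_left (le_max_left _ _) (hnn k)).trans
      (mul_le_mul_of_nonneg_right (hle k) (le_max_right _ _))
  linarith [hlag π]
end
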